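/- Let X, Y ∈ G_∞(H) be compatible subspaces such that X ∩ Y has codimension 2 in both X and Y, and let Z ∈ G_∞(H) be ortho-adjacent to both X and Y. Then there are precisely two elements of G_∞(H) which are ortho-adjacent to each of X, Y and Z. -/

import Mathlib

open Module Submodule Classical

variable {H : Type*} [NormedAddCommGroup H] [InnerProductSpace ℂ H] [CompleteSpace H]

/-- The orthogonal projection of `H` onto a closed subspace `K`, as a map `H →L[ℂ] H`
(defined to be `0` if `K` is not closed). -/
noncomputable def projCLM (K : Submodule ℂ H) : H →L[ℂ] H :=
  if h : IsClosed (K : Set H) then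
    haveI : CompleteSpace K := h.completeSpace_coe
    K.subtypeL.comp (orthogonalProjection K)
  else 0

/-- Two (closed) subspaces are compatible if their orthogonal projections commute. -/
def Compatible (K L : Submodule ℂ H) : Prop := Commute (projCLM K) (projCLM L)

/-- `W` is a subspace of `X` of finite codimension `n` in `X`. -/
def CodimIn (W X : Submodule ℂ H) (n : ℕ) : Prop :=
  W ≤ X ∧ FiniteDimensional ℂ (↥X ⧸ W.comap X.subtype) ∧
    finrank ℂ (↥X ⧸ W.comap X.subtype) = n

/-- `X` and `Y` are adjacent: `X ∩ Y` is a hyperplane in both `X` and `Y`. -/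
def Adjacent (X Y : Submodule ℂ H) : Prop :=
  CodimIn (X ⊓ Y) X 1 ∧ CodimIn (X ⊓ Y) Y 1

/-- `X` and `Y` are ortho-adjacent: adjacent and compatible. -/
def OrthoAdjacent (X Y : Submodule ℂ H) : Prop := Adjacent X Y ∧ Compatible X Y

/-- The Grassmannian `G_∞(H)` of closed subspaces of `H` whose dimension and
codimension both are infinite. -/
def Ginf : Set (Submodule ℂ H) :=
  {X | IsClosed (X : Set H) ∧ ¬FiniteDimensional ℂ X ∧ ¬FiniteDimensional ℂ Xᗮ}

/-- `X ∩ Y` has the same finite codimension in both `X` and `Y`. -/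
def SameFinCodim (X Y : Submodule ℂ H) : Prop :=
  ∃ n : ℕ, CodimIn (X ⊓ Y) X n ∧ CodimIn (X ⊓ Y) Y n

/-- An `A`-component of `G_∞(H)`: a set of elements pairwise at the same finite
codimension, maximal with respect to this property. -/
def IsAComponent (C : Set (Submodule ℂ H)) : Prop :=
  C ⊆ Ginf ∧ (∀ X ∈ C, ∀ Y ∈ C, SameFinCodim X Y) ∧
    ∀ D : Set (Submodule ℂ H), D ⊆ Ginf → (∀ X ∈ D, ∀ Y ∈ D, SameFinCodim X Y) →
      C ⊆ D → D = C

/-- The star `S(X)`: all closed subspaces of `H` containing `X` as a hyperplane. -/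
def starSet (X : Submodule ℂ H) : Set (Submodule ℂ H) :=
  {Y | IsClosed (Y : Set H) ∧ CodimIn X Y 1}

/-- The top `G¹(X)`: all closed hyperplanes of `X`. -/
def topSet (X : Submodule ℂ H) : Set (Submodule ℂ H) :=
  {M | IsClosed (M : Set H) ∧ CodimIn M X 1}

/-- The image `U(M)` of a subspace `M ⊆ X` under a linear isometry `U : X ≃ X'`,
viewed as a subspace of `H`. -/
def imL (X X' : Submodule ℂ H) (U : ↥X ≃ₗᵢ[ℂ] ↥X') (M : Submodule ℂ H) : Submodule ℂ H :=
  Submodule.map X'.subtype (Submodule.map U.toLinearEquiv.toLinearMap (M.comap X.subtype))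

/-- The image `U(M)` of a subspace `M ⊆ X` under a conjugate-linear isometry `U : X ≃ X'`,
viewed as a subspace of `H`. -/
def imC (X X' : Submodule ℂ H) (U : ↥X ≃ₗᵢ⋆[ℂ] ↥X') (M : Submodule ℂ H) : Submodule ℂ H :=
  Submodule.map X'.subtype (Submodule.map U.toLinearEquiv.toLinearMap (M.comap X.subtype))

/-- The Grassmannian `G_k(H)` of `k`-dimensional subspaces of `H`. -/
def Gk (k : ℕ) : Set (Submodule ℂ H) :=
  {X | FiniteDimensional ℂ X ∧ finrank ℂ X = k}

/-- The Grassmannian `G^k(H)` of closed subspaces of `H` of codimension `k`. -/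
def GCk (k : ℕ) : Set (Submodule ℂ H) :=
  {X | IsClosed (X : Set H) ∧ FiniteDimensional ℂ (H ⧸ X) ∧ finrank ℂ (H ⧸ X) = k}


lemma projCLM_eq {K : Submodule ℂ H} (hK : IsClosed (K : Set H)) {x y : H} (hy : y ∈ K)
    (h : x - y ∈ Kᗮ) : projCLM K x = y := by
  haveI : CompleteSpace K := hK.completeSpace_coe
  have := Submodule.eq_starProjection_of_mem_orthogonal hy h
  rw [projCLM, dif_pos hK]
  exact this

lemma projCLM_mem {K : Submodule ℂ H} (hK : IsClosed (K : Set H)) (x : H) :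
    projCLM K x ∈ K ∧ x - projCLM K x ∈ Kᗮ := by
  haveI : CompleteSpace K := hK.completeSpace_coe
  have h1 := projCLM_eq hK (Submodule.starProjection_apply_mem K x)
    (Submodule.sub_starProjection_mem_orthogonal x)
  rw [h1]
  exact ⟨Submodule.starProjection_apply_mem K x, Submodule.sub_starProjection_mem_orthogonal x⟩

lemma mem_orth_self {K : Submodule ℂ H} {x : H} (h1 : x ∈ K) (h2 : x ∈ Kᗮ) : x = 0 :=
  inner_self_eq_zero.1 (h2 x h1)

lemma compat_dec {K L : Submodule ℂ H} (hK : IsClosed (K : Set H)) (hL : IsClosed (L : Set H))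
    (h : Compatible K L) (x : H) (hx : x ∈ K) : ∃ y ∈ K, y ∈ L ∧ x - y ∈ Lᗮ := by
  refine ⟨projCLM L x, ?_, projCLM_mem hL x⟩
  have h1 : projCLM K x = x := projCLM_eq hK hx (by simp)
  have h2 := DFunLike.congr_fun h.eq x
  simp only [ContinuousLinearMap.mul_apply, h1] at h2
  rw [← h2]
  exact (projCLM_mem hK _).1

lemma codim_iff {K L : Submodule ℂ H} (D : ∀ x ∈ K, ∃ y ∈ K, y ∈ L ∧ x - y ∈ Lᗮ) (n : ℕ) :
    CodimIn (K ⊓ L) K n ↔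
      FiniteDimensional ℂ ↥(K ⊓ Lᗮ) ∧ finrank ℂ ↥(K ⊓ Lᗮ) = n := by
  have hc : IsCompl ((K ⊓ L).comap K.subtype) ((K ⊓ Lᗮ).comap K.subtype) := by
    constructor
    · rw [Submodule.disjoint_def]
      intro x h1 h2
      exact Subtype.ext (mem_orth_self h1.2 h2.2)
    · rw [codisjoint_iff, eq_top_iff]
      rintro ⟨x, hx⟩ -
      obtain ⟨y, hy, hyL, hyo⟩ := D x hx
      rw [Submodule.mem_sup]
      exact ⟨⟨y, hy⟩, ⟨hy, hyL⟩, ⟨x - y, K.sub_mem hx hy⟩, ⟨K.sub_mem hx hy, hyo⟩,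
        Subtype.ext (by simp)⟩
  let e := (Submodule.quotientEquivOfIsCompl _ _ hc).trans
    (Submodule.comapSubtypeEquivOfLe (inf_le_left : K ⊓ Lᗮ ≤ K))
  constructor
  · rintro ⟨-, h1, h2⟩
    exact ⟨e.finiteDimensional, by rw [← e.finrank_eq, h2]⟩
  · rintro ⟨h1, h2⟩
    exact ⟨inf_le_left, e.symm.finiteDimensional, by rw [e.finrank_eq, h2]⟩

def Dec (K L : Submodule ℂ H) (v t : H) : Prop :=
  v ≠ 0 ∧ t ≠ 0 ∧ v ∈ K ∧ v ∈ Lᗮ ∧ t ∈ L ∧ t ∈ Kᗮ ∧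
    (∀ x ∈ K, ∃ c : ℂ, x - c • v ∈ L) ∧ (∀ x ∈ L, ∃ c : ℂ, x - c • t ∈ K)

lemma codim_one {K L : Submodule ℂ H} (D : ∀ x ∈ K, ∃ y ∈ K, y ∈ L ∧ x - y ∈ Lᗮ)
    (h : CodimIn (K ⊓ L) K 1) : ∃ v : H, v ≠ 0 ∧ v ∈ K ∧ v ∈ Lᗮ ∧
      ∀ x ∈ K, ∃ c : ℂ, x - c • v ∈ L := by
  obtain ⟨h1, h2⟩ := (codim_iff D 1).1 h
  obtain ⟨⟨v, hv⟩, hv0, hs⟩ := finrank_eq_one_iff'.1 h2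
  refine ⟨v, fun h => hv0 (Subtype.ext h), hv.1, hv.2, fun x hx => ?_⟩
  obtain ⟨y, hy, hyL, hyo⟩ := D x hx
  obtain ⟨c, hc⟩ := hs ⟨x - y, K.sub_mem hx hy, hyo⟩
  refine ⟨c, ?_⟩
  have hc : c • v = x - y := congrArg Subtype.val hc
  rw [hc]; simpa using hyL

lemma exists_dec {K L : Submodule ℂ H} (hK : IsClosed (K : Set H)) (hL : IsClosed (L : Set H))
    (h : OrthoAdjacent K L) : ∃ v t, Dec K L v t := by
  obtain ⟨⟨h1, h2⟩, h3⟩ := h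
  rw [inf_comm] at h2
  obtain ⟨v, a1, a2, a3, a4⟩ := codim_one (compat_dec hK hL h3) h1
  obtain ⟨t, b1, b2, b3, b4⟩ := codim_one (compat_dec hL hK (Commute.symm h3)) h2
  exact ⟨v, t, a1, b1, a2, a3, b2, b3, a4, b4⟩

lemma exists_orth {A : Submodule ℂ H} (h1 : FiniteDimensional ℂ A) (h2 : finrank ℂ A = 2) (u : H) :
    ∃ a ∈ A, a ≠ 0 ∧ inner ℂ u a = 0 := by
  have := LinearMap.ker_ne_bot_of_finrank_lt
    (f := ((innerSL ℂ u).toLinearMap.comp A.subtype)) (by simp [h2])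
  obtain ⟨a, ha, ha0⟩ := Submodule.exists_mem_ne_zero_of_ne_bot this
  exact ⟨a, a.2, fun h => ha0 (Subtype.ext h), by simpa using ha⟩

def Half (X Y W : Submodule ℂ H) (a u : H) : Prop :=
  a ∈ X ∧ a ∈ Yᗮ ∧ u ∈ X ∧ u ∈ Yᗮ ∧ a ≠ 0 ∧ u ≠ 0 ∧ inner ℂ a u = 0 ∧ a ∈ W ∧
    X ⊓ Y ≤ W ∧ (∀ x ∈ W, ∃ c : ℂ, x - c • a ∈ Y) ∧
    (∀ x ∈ X, x ∈ Yᗮ → ∃ α γ : ℂ, x = α • a + γ • u)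

lemma half_of {X Y W : Submodule ℂ H} {v u v' u' : H} (D : Dec W X v u) (D' : Dec W Y v' u')
    (h1 : FiniteDimensional ℂ ↥(X ⊓ Yᗮ)) (h2 : finrank ℂ ↥(X ⊓ Yᗮ) = 2) :
    ∃ a, Half X Y W a u := by
  obtain ⟨-, hu0, -, -, huX, huW, -, hXW⟩ := D
  obtain ⟨hv0', -, hvW', hvY', -, -, hWY, -⟩ := D'
  obtain ⟨a, ⟨haX, haY⟩, ha0, hua⟩ := exists_orth h1 h2 u
  have orthW : ∀ x ∈ X, inner ℂ u x = 0 → x ∈ W := by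
    intro x hx hux
    obtain ⟨c, hc⟩ := hXW x hx
    have : inner ℂ u (x - c • u) = 0 := Submodule.inner_left_of_mem_orthogonal hc huW
    rw [inner_sub_right, hux, inner_smul_right] at this
    have hc0 : c = 0 := by
      have h3 : inner ℂ u u ≠ 0 := inner_self_ne_zero.2 hu0
      simpa [hu0] using this
    simpa [hc0] using hc
  have haW := orthW a haX hua
  -- elements of W orthogonal to Y
  have key : ∀ x ∈ W, x ∈ Yᗮ → ∃ c : ℂ, x = c • v' := by
    intro x hx hxY
    obtain ⟨c, hc⟩ := hWY x hx
    exact ⟨c, sub_eq_zero.1 (mem_orth_self hc (Yᗮ.sub_mem hxY (Yᗮ.smul_mem c hvY')))⟩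
  obtain ⟨k, hk⟩ := key a haW haY
  have hk0 : k ≠ 0 := by rintro rfl; simp at hk; exact ha0 hk
  have hv'a : v' = k⁻¹ • a := by rw [hk, smul_smul, inv_mul_cancel₀ hk0, one_smul]
  have hWY' : ∀ x ∈ W, ∃ c : ℂ, x - c • a ∈ Y := by
    intro x hx
    obtain ⟨c, hc⟩ := hWY x hx
    exact ⟨c * k⁻¹, by rwa [mul_smul, ← hv'a]⟩
  have key' : ∀ x ∈ W, x ∈ Yᗮ → ∃ c : ℂ, x = c • a := by
    intro x hx hxY
    obtain ⟨c, hc⟩ := key x hx hxY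
    exact ⟨c * k⁻¹, by rwa [mul_smul, ← hv'a]⟩
  have huY : u ∈ Yᗮ := by
    obtain ⟨a', ⟨haX', haY'⟩, ha0', haa'⟩ := exists_orth h1 h2 a
    obtain ⟨d, hd⟩ := hXW a' haX'
    have hd0 : d ≠ 0 := by
      rintro rfl
      simp only [zero_smul, sub_zero] at hd
      obtain ⟨c, hc⟩ := key' a' hd haY'
      apply ha0'
      rw [hc, inner_smul_right] at haa'
      have h3 : inner ℂ a a ≠ 0 := inner_self_ne_zero.2 ha0
      have : c = 0 := by simpa [ha0] using haa'
      simp [hc, this]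
    obtain ⟨c, hc⟩ := hWY' _ hd
    have hmW : a' - d • u - c • a ∈ W := W.sub_mem hd (W.smul_mem _ haW)
    have e1 : inner ℂ (a' - d • u - c • a) u = 0 :=
      Submodule.inner_right_of_mem_orthogonal hmW huW
    have e2 : inner ℂ (a' - d • u - c • a) a' = 0 :=
      Submodule.inner_right_of_mem_orthogonal hc haY'
    have e3 : inner ℂ (a' - d • u - c • a) a = 0 :=
      Submodule.inner_right_of_mem_orthogonal hc haY
    have e4 : a' - d • u - c • a = 0 := by
      rw [← inner_self_eq_zero (𝕜 := ℂ)]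
      conv_lhs => rw [inner_sub_right, inner_sub_right, inner_smul_right, inner_smul_right]
      rw [e1, e2, e3]; simp
    have e5 : u = d⁻¹ • (a' - c • a) := by
      have : a' - c • a = d • u := by
        rw [← sub_eq_zero, ← e4]; abel
      rw [this, smul_smul, inv_mul_cancel₀ hd0, one_smul]
    rw [e5]
    exact Yᗮ.smul_mem _ (Yᗮ.sub_mem haY' (Yᗮ.smul_mem _ haY))
  refine ⟨a, haX, haY, huX, huY, ha0, hu0, ?_, haW, ?_, hWY', ?_⟩
  · exact inner_eq_zero_symm.1 hua
  · rintro x ⟨hx, hxY⟩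
    exact orthW x hx (Submodule.inner_left_of_mem_orthogonal hxY huY)
  · intro x hx hxY
    obtain ⟨c, hc⟩ := hXW x hx
    obtain ⟨α, hα⟩ := key' _ hc (Yᗮ.sub_mem hxY (Yᗮ.smul_mem _ huY))
    exact ⟨α, c, by rw [← hα]; simp⟩

lemma mem_sup2 {M : Submodule ℂ H} {a b x : H} :
    x ∈ M ⊔ span ℂ {a} ⊔ span ℂ {b} ↔ ∃ m ∈ M, ∃ α β : ℂ, x = m + α • a + β • b := by
  simp only [Submodule.mem_sup, Submodule.mem_span_singleton]
  constructor
  · rintro ⟨_, ⟨m, hm, _, ⟨α, rfl⟩, rfl⟩, _, ⟨β, rfl⟩, rfl⟩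
    exact ⟨m, hm, α, β, rfl⟩
  · rintro ⟨m, hm, α, β, rfl⟩
    exact ⟨_, ⟨m, hm, _, ⟨α, rfl⟩, rfl⟩, _, ⟨β, rfl⟩, rfl⟩

lemma half_eq {X Y W : Submodule ℂ H} {a u b u' : H} (h : Half X Y W a u) (h' : Half Y X W b u') :
    W = (X ⊓ Y) ⊔ span ℂ {a} ⊔ span ℂ {b} := by
  obtain ⟨haX, haY, huX, huY, ha0, hu0, hau, haW, hMW, hWY, hA⟩ := h
  obtain ⟨hbY, hbX, -, -, hb0, -, -, hbW, -, hWX, -⟩ := h'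
  apply le_antisymm
  · intro x hx
    rw [mem_sup2]
    obtain ⟨c, hc⟩ := hWY x hx
    obtain ⟨d, hd⟩ := hWX _ (W.sub_mem hx (W.smul_mem c haW))
    exact ⟨_, ⟨hd, Y.sub_mem hc (Y.smul_mem _ hbY)⟩, c, d, by abel⟩
  · intro x hx
    obtain ⟨m, hm, α, β, rfl⟩ := mem_sup2.1 hx
    exact W.add_mem (W.add_mem (hMW hm) (W.smul_mem _ haW)) (W.smul_mem _ hbW)

lemma half_X {X Y W : Submodule ℂ H} {a u : H} (h : Half X Y W a u)
    (D : ∀ x ∈ X, ∃ y ∈ X, y ∈ Y ∧ x - y ∈ Yᗮ) :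
    X = (X ⊓ Y) ⊔ span ℂ {a} ⊔ span ℂ {u} := by
  obtain ⟨haX, haY, huX, huY, ha0, hu0, hau, haW, hMW, hWY, hA⟩ := h
  apply le_antisymm
  · intro x hx
    rw [mem_sup2]
    obtain ⟨y, hy, hyY, hyo⟩ := D x hx
    obtain ⟨α, β, h⟩ := hA _ (X.sub_mem hx hy) hyo
    exact ⟨y, ⟨hy, hyY⟩, α, β, by rw [add_assoc, ← h]; abel⟩
  · intro x hx
    obtain ⟨m, hm, α, β, rfl⟩ := mem_sup2.1 hx
    exact X.add_mem (X.add_mem hm.1 (X.smul_mem _ haX)) (X.smul_mem _ huX)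

/-- uniqueness, one half -/
lemma uniq_half {X Y Z W : Submodule ℂ H} {a c b d a' c' b' d' v t : H}
    (hZ : Half X Y Z a c) (hZ' : Half Y X Z b d)
    (hW : Half X Y W a' c') (hW' : Half Y X W b' d') (D : Dec W Z v t)
    (hv : ∃ β : ℂ, v = β • b') : W = (X ⊓ Y) ⊔ span ℂ {a} ⊔ span ℂ {d} := by
  have eZ := half_eq hZ hZ'
  have eW := half_eq hW hW'
  obtain ⟨haX, haY, hcX, hcY, ha0, hc0, hac, haZ, hMZ, hZY, hA⟩ := hZ
  obtain ⟨hbY, hbX, hdY, hdX, hb0, hd0, hbd, hbZ, -, hZX, hB⟩ := hZ'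
  obtain ⟨haX', haY', -, -, ha0', -, -, haW', hMW, hWY, -⟩ := hW
  obtain ⟨hbY', hbX', -, -, hb0', -, -, hbW', -, hWX, -⟩ := hW'
  obtain ⟨hv0, -, hvW, hvZ, -, -, hWZ, -⟩ := D
  obtain ⟨β, rfl⟩ := hv
  have hβ : β ≠ 0 := by rintro rfl; simp at hv0
  -- b' orthogonal to b
  have hbb : inner ℂ b b' = 0 := by
    have := Submodule.inner_right_of_mem_orthogonal hbZ hvZ
    rw [inner_smul_right] at this
    simpa [hβ] using this
  obtain ⟨p, q, hpq⟩ := hB b' hbY' hbX'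
  have hp : p = 0 := by
    rw [hpq, inner_add_right, inner_smul_right, inner_smul_right, hbd] at hbb
    have h3 : inner ℂ b b ≠ 0 := inner_self_ne_zero.2 hb0
    simpa [hb0] using hbb
  have hpq : b' = q • d := by rw [hpq, hp]; simp
  have hq : q ≠ 0 := by rintro rfl; simp at hpq; exact hb0' hpq
  have hdq : d = q⁻¹ • b' := by rw [hpq, smul_smul, inv_mul_cancel₀ hq, one_smul]
  obtain ⟨k, hk⟩ := hWZ a' haW'
  rw [eZ, mem_sup2] at hk
  obtain ⟨m, hm, γ, δ, hk⟩ := hk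
  have e1 : a' - γ • a = m + δ • b + k • β • b' := by
    rw [sub_eq_iff_eq_add] at hk ⊢
    rw [hk]; abel
  have e2 : a' - γ • a = 0 := by
    apply mem_orth_self (K := Y)
    · rw [e1]
      exact Y.add_mem (Y.add_mem hm.2 (Y.smul_mem _ hbY)) (Y.smul_mem _ (Y.smul_mem _ hbY'))
    · exact Yᗮ.sub_mem haY' (Yᗮ.smul_mem _ haY)
  have e3 : a' = γ • a := sub_eq_zero.1 e2
  have hγ : γ ≠ 0 := by rintro rfl; simp at e3; exact ha0' e3
  have e4 : a = γ⁻¹ • a' := by rw [e3, smul_smul, inv_mul_cancel₀ hγ, one_smul]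
  rw [eW]
  ext x
  rw [mem_sup2, mem_sup2]
  constructor
  · rintro ⟨m, hm, α, β, rfl⟩
    exact ⟨m, hm, α * γ, β * q, by rw [mul_smul, mul_smul, ← e3, ← hpq]⟩
  · rintro ⟨m, hm, α, β, rfl⟩
    exact ⟨m, hm, α * γ⁻¹, β * q⁻¹, by rw [mul_smul, mul_smul, ← e4, ← hdq]⟩

lemma uniq {X Y Z W : Submodule ℂ H} {a c b d a' c' b' d' v t : H}
    (hZ : Half X Y Z a c) (hZ' : Half Y X Z b d)
    (hW : Half X Y W a' c') (hW' : Half Y X W b' d') (D : Dec W Z v t) :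
    W = (X ⊓ Y) ⊔ span ℂ {a} ⊔ span ℂ {d} ∨ W = (X ⊓ Y) ⊔ span ℂ {c} ⊔ span ℂ {b} := by
  have eZ := half_eq hZ hZ'
  have eW := half_eq hW hW'
  have U1 := uniq_half hZ hZ' hW hW' D
  have U2 := uniq_half hZ' hZ hW' hW D
  obtain ⟨haX, haY, hcX, hcY, ha0, hc0, hac, haZ, hMZ, hZY, hA⟩ := hZ
  obtain ⟨hbY, hbX, hdY, hdX, hb0, hd0, hbd, hbZ, -, hZX, hB⟩ := hZ'
  obtain ⟨haX', haY', -, -, ha0', -, -, haW', hMW, hWY, -⟩ := hW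
  obtain ⟨hbY', hbX', -, -, hb0', -, -, hbW', -, hWX, -⟩ := hW'
  obtain ⟨hv0, -, hvW, hvZ, -, -, hWZ, -⟩ := D
  have hvW2 := hvW
  rw [eW, mem_sup2] at hvW2
  obtain ⟨m, hm, α, β, hv⟩ := hvW2
  have iab : ∀ x ∈ X, x ∈ Yᗮ → ∀ y ∈ Y, inner ℂ x y = 0 := fun x _ hx y hy =>
    Submodule.inner_left_of_mem_orthogonal hy hx
  have iba : ∀ x ∈ X, ∀ y ∈ Y, y ∈ Xᗮ → inner ℂ y x = 0 := fun x hx y _ hy =>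
    Submodule.inner_left_of_mem_orthogonal hx hy
  have hm0 : m = 0 := by
    have h1 : inner ℂ m v = 0 := Submodule.inner_right_of_mem_orthogonal (hMZ hm) hvZ
    rw [hv, inner_add_right, inner_add_right, inner_smul_right, inner_smul_right,
      Submodule.inner_right_of_mem_orthogonal hm.2 haY',
      Submodule.inner_right_of_mem_orthogonal hm.1 hbX'] at h1
    simpa using h1
  rw [hm0, zero_add] at hv
  by_cases hα : α = 0
  · left
    exact U1 ⟨β, by simp [hv, hα]⟩
  by_cases hβ : β = 0
  · right
    rw [U2 ⟨α, by simp [hv, hβ]⟩, inf_comm Y X, sup_right_comm]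
  exfalso
  have haa : inner ℂ a a' = 0 := by
    have h1 : inner ℂ a v = 0 := Submodule.inner_right_of_mem_orthogonal haZ hvZ
    rw [hv, inner_add_right, inner_smul_right, inner_smul_right, iab a haX haY b' hbY'] at h1
    simpa [hα] using h1
  have hbb : inner ℂ b b' = 0 := by
    have h1 : inner ℂ b v = 0 := Submodule.inner_right_of_mem_orthogonal hbZ hvZ
    rw [hv, inner_add_right, inner_smul_right, inner_smul_right, iba a' haX' b hbY hbX] at h1
    simpa [hβ] using h1
  have haZ' : a' ∈ Zᗮ := by
    intro z hz
    rw [eZ, mem_sup2] at hz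
    obtain ⟨m, hm, p, q, rfl⟩ := hz
    rw [inner_add_left, inner_add_left, inner_smul_left, inner_smul_left, haa,
      iba a' haX' b hbY hbX, Submodule.inner_right_of_mem_orthogonal hm.2 haY']
    simp
  obtain ⟨k, hk⟩ := hWZ a' haW'
  have e : a' = k • v :=
    sub_eq_zero.1 (mem_orth_self hk (Zᗮ.sub_mem haZ' (Zᗮ.smul_mem _ hvZ)))
  have e1 : inner ℂ b' a' = 0 := iba a' haX' b' hbY' hbX'
  have e1c := e1
  rw [e, hv, inner_smul_right, inner_add_right, inner_smul_right, inner_smul_right, e1c] at e1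
  have h3 : inner ℂ b' b' ≠ 0 := inner_self_ne_zero.2 hb0'
  have hk0 : k = 0 := by simpa [hb0', hβ] using e1
  rw [hk0, zero_smul] at e
  exact ha0' e

lemma orth_sup {N : Submodule ℂ H} {e x : H} (h : x ∈ Nᗮ) (h' : inner ℂ e x = 0) :
    x ∈ (N ⊔ span ℂ {e})ᗮ := by
  rw [← Submodule.inf_orthogonal]
  exact ⟨h, Submodule.mem_orthogonal_singleton_iff_inner_right.2 h'⟩

lemma mem_sup1 {N : Submodule ℂ H} {e n : H} (α : ℂ) (h : n ∈ N) : n + α • e ∈ N ⊔ span ℂ {e} :=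
  Submodule.add_mem_sup h (Submodule.smul_mem _ _ (Submodule.mem_span_singleton_self e))

lemma split3 {N : Submodule ℂ H} (hN : IsClosed (N : Set H)) {e f : H} (he0 : e ≠ 0)
    (hf0 : f ≠ 0) (he : e ∈ Nᗮ) (hf : f ∈ Nᗮ) (hef : inner ℂ e f = 0) (x : H) :
    ∃ n ∈ N, ∃ α β : ℂ, ∃ r ∈ Nᗮ, inner ℂ e r = 0 ∧ inner ℂ f r = 0 ∧
      x = n + α • e + β • f + r := by
  have hfe : inner ℂ f e = 0 := inner_eq_zero_symm.1 hef
  have he1 : inner ℂ e e ≠ 0 := inner_self_ne_zero.2 he0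
  have hf1 : inner ℂ f f ≠ 0 := inner_self_ne_zero.2 hf0
  obtain ⟨h1, h2⟩ := projCLM_mem hN x
  set n := projCLM N x
  refine ⟨n, h1, inner ℂ e (x - n) / inner ℂ e e, inner ℂ f (x - n) / inner ℂ f f,
    (x - n) - (inner ℂ e (x - n) / inner ℂ e e) • e - (inner ℂ f (x - n) / inner ℂ f f) • f,
    ?_, ?_, ?_, ?_⟩
  · exact Nᗮ.sub_mem (Nᗮ.sub_mem h2 (Nᗮ.smul_mem _ he)) (Nᗮ.smul_mem _ hf)
  · generalize x - n = y
    rw [inner_sub_right, inner_sub_right, inner_smul_right, inner_smul_right, hef,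
      div_mul_cancel₀ _ he1]
    simp
  · generalize x - n = y
    rw [inner_sub_right, inner_sub_right, inner_smul_right, inner_smul_right, hfe,
      div_mul_cancel₀ _ hf1]
    simp
  · abel

lemma closed_sup1 {N : Submodule ℂ H} (hN : IsClosed (N : Set H)) (e : H) :
    IsClosed ((N ⊔ span ℂ {e} : Submodule ℂ H) : Set H) :=
  Submodule.isClosed_sup_finiteDimensional _ _ hN

lemma codim_sup1 {N L : Submodule ℂ H} {e f : H} (he0 : e ≠ 0)
    (he : e ∈ Nᗮ) (hef : inner ℂ f e = 0) (hL : L = N ⊔ span ℂ {f}) :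
    CodimIn ((N ⊔ span ℂ {e}) ⊓ L) (N ⊔ span ℂ {e}) 1 := by
  have heL : e ∈ Lᗮ := hL ▸ orth_sup he hef
  have hNL : N ≤ L := hL ▸ le_sup_left
  have hs : ∀ x ∈ N ⊔ span ℂ {e}, ∃ n ∈ N, ∃ α : ℂ, x = n + α • e := by
    intro x hx
    obtain ⟨n, hn, _, hy, rfl⟩ := Submodule.mem_sup.1 hx
    obtain ⟨α, rfl⟩ := Submodule.mem_span_singleton.1 hy
    exact ⟨n, hn, α, rfl⟩
  rw [codim_iff]
  · have : (N ⊔ span ℂ {e}) ⊓ Lᗮ = span ℂ {e} := by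
      apply le_antisymm
      · rintro x ⟨hx, hxL⟩
        obtain ⟨n, hn, α, rfl⟩ := hs x hx
        have : n ∈ Lᗮ := by
          have := Lᗮ.sub_mem hxL (Lᗮ.smul_mem α heL)
          simpa using this
        rw [mem_orth_self (hNL hn) this, zero_add]
        exact Submodule.smul_mem _ _ (Submodule.mem_span_singleton_self e)
      · rw [Submodule.span_singleton_le_iff_mem]
        exact ⟨Submodule.mem_sup_right (Submodule.mem_span_singleton_self e), heL⟩
    rw [this]
    exact ⟨inferInstance, finrank_span_singleton he0⟩
  · intro x hx
    obtain ⟨n, hn, α, rfl⟩ := hs x hx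
    exact ⟨n, Submodule.mem_sup_left hn, hNL hn, by simpa using Lᗮ.smul_mem α heL⟩

lemma ortho_of {N : Submodule ℂ H} (hN : IsClosed (N : Set H)) {e f : H} (he0 : e ≠ 0)
    (hf0 : f ≠ 0) (he : e ∈ Nᗮ) (hf : f ∈ Nᗮ) (hef : inner ℂ e f = 0) :
    OrthoAdjacent (N ⊔ span ℂ {e}) (N ⊔ span ℂ {f}) := by
  have hfe : inner ℂ f e = 0 := inner_eq_zero_symm.1 hef
  refine ⟨⟨codim_sup1 he0 he hfe rfl, ?_⟩, ?_⟩
  · rw [inf_comm]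
    exact codim_sup1 hf0 hf hef rfl
  · ext x
    obtain ⟨n, hn, α, β, r, hr, her, hfr, rfl⟩ := split3 hN he0 hf0 he hf hef x
    have hK := closed_sup1 hN e
    have hL := closed_sup1 hN f
    have p1 : projCLM (N ⊔ span ℂ {e}) (n + α • e + β • f + r) = n + α • e := by
      apply projCLM_eq hK (mem_sup1 α hn)
      have : n + α • e + β • f + r - (n + α • e) = β • f + r := by abel
      rw [this]
      apply orth_sup (Nᗮ.add_mem (Nᗮ.smul_mem _ hf) hr)
      rw [inner_add_right, inner_smul_right, hef, her]; simp
    have p2 : projCLM (N ⊔ span ℂ {f}) (n + α • e + β • f + r) = n + β • f := by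
      apply projCLM_eq hL (mem_sup1 β hn)
      have : n + α • e + β • f + r - (n + β • f) = α • e + r := by abel
      rw [this]
      apply orth_sup (Nᗮ.add_mem (Nᗮ.smul_mem _ he) hr)
      rw [inner_add_right, inner_smul_right, hfe, hfr]; simp
    have p3 : projCLM (N ⊔ span ℂ {e}) (n + β • f) = n := by
      apply projCLM_eq hK (Submodule.mem_sup_left hn)
      rw [add_sub_cancel_left]
      apply orth_sup (Nᗮ.smul_mem _ hf)
      rw [inner_smul_right, hef]; simp
    have p4 : projCLM (N ⊔ span ℂ {f}) (n + α • e) = n := by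
      apply projCLM_eq hL (Submodule.mem_sup_left hn)
      rw [add_sub_cancel_left]
      apply orth_sup (Nᗮ.smul_mem _ he)
      rw [inner_smul_right, hfe]; simp
    simp only [ContinuousLinearMap.mul_apply, p1, p2, p3, p4]

lemma ginf_of {N : Submodule ℂ H} (hN : IsClosed (N : Set H)) {e f : H} (hf0 : f ≠ 0)
    (hf : f ∈ Nᗮ) (hK : N ⊔ span ℂ {e} ∈ Ginf (H := H)) : N ⊔ span ℂ {f} ∈ Ginf (H := H) := by
  obtain ⟨-, h2, h3⟩ := hK
  refine ⟨closed_sup1 hN f, fun h => h2 ?_, fun h => h3 ?_⟩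
  · haveI : FiniteDimensional ℂ N := Submodule.finiteDimensional_of_le (le_sup_left : N ≤ N ⊔ span ℂ {f})
    infer_instance
  · apply Submodule.finiteDimensional_of_le (S₂ := (N ⊔ span ℂ {f})ᗮ ⊔ span ℂ {f})
    intro x hx
    have hxN : x ∈ Nᗮ := Submodule.orthogonal_le le_sup_left hx
    have hf1 : inner ℂ f f ≠ 0 := inner_self_ne_zero.2 hf0
    have : x = (x - (inner ℂ f x / inner ℂ f f) • f) + (inner ℂ f x / inner ℂ f f) • f := by abel
    rw [this]
    apply mem_sup1
    apply orth_sup (Nᗮ.sub_mem hxN (Nᗮ.smul_mem _ hf))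
    rw [inner_sub_right, inner_smul_right, div_mul_cancel₀ _ hf1, sub_self]

lemma exist_half {X Y Z : Submodule ℂ H} {a c b d : H} (hX : X ∈ Ginf (H := H))
    (hY : Y ∈ Ginf (H := H)) (hZ : Half X Y Z a c) (hZ' : Half Y X Z b d)
    (DX : ∀ x ∈ X, ∃ y ∈ X, y ∈ Y ∧ x - y ∈ Yᗮ) (DY : ∀ x ∈ Y, ∃ y ∈ Y, y ∈ X ∧ x - y ∈ Xᗮ) :
    let W := (X ⊓ Y) ⊔ span ℂ {a} ⊔ span ℂ {d}
    W ∈ Ginf (H := H) ∧ OrthoAdjacent W X ∧ OrthoAdjacent W Y ∧ OrthoAdjacent W Z ∧ c ∉ W := by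
  intro W
  have eZ := half_eq hZ hZ'
  have eX := half_X hZ DX
  have eY := half_X hZ' DY
  rw [inf_comm Y X] at eY
  obtain ⟨haX, haY, hcX, hcY, ha0, hc0, hac, haZ, hMZ, hZY, hA⟩ := hZ
  obtain ⟨hbY, hbX, hdY, hdX, hb0, hd0, hbd, hbZ, -, hZX, hB⟩ := hZ'
  have hM : IsClosed ((X ⊓ Y : Submodule ℂ H) : Set H) := hX.1.inter hY.1
  have mA : ∀ x ∈ Yᗮ, x ∈ (X ⊓ Y)ᗮ := fun x hx => Submodule.orthogonal_le inf_le_right hx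
  have mB : ∀ x ∈ Xᗮ, x ∈ (X ⊓ Y)ᗮ := fun x hx => Submodule.orthogonal_le inf_le_left hx
  have o1 : ∀ x ∈ X, ∀ y ∈ Xᗮ, inner ℂ x y = 0 := fun x hx y hy =>
    Submodule.inner_right_of_mem_orthogonal hx hy
  have o2 : ∀ x ∈ Y, ∀ y ∈ Yᗮ, inner ℂ x y = 0 := fun x hx y hy =>
    Submodule.inner_right_of_mem_orthogonal hx hy
  have hNa := closed_sup1 hM a
  have hNd := closed_sup1 hM d
  have hda : d ∈ ((X ⊓ Y) ⊔ span ℂ {a})ᗮ := orth_sup (mB d hdX) (o1 a haX d hdX)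
  have hca : c ∈ ((X ⊓ Y) ⊔ span ℂ {a})ᗮ := orth_sup (mA c hcY) hac
  have hba : b ∈ ((X ⊓ Y) ⊔ span ℂ {a})ᗮ := orth_sup (mB b hbX) (o1 a haX b hbX)
  have had : a ∈ ((X ⊓ Y) ⊔ span ℂ {d})ᗮ := orth_sup (mA a haY) (o2 d hdY a haY)
  have hbd' : b ∈ ((X ⊓ Y) ⊔ span ℂ {d})ᗮ := orth_sup (mB b hbX) (inner_eq_zero_symm.1 hbd)
  have hcW : c ∈ Wᗮ := orth_sup hca (o2 d hdY c hcY)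
  refine ⟨?_, ?_, ?_, ?_, fun h => hc0 (mem_orth_self h hcW)⟩
  · rw [eX] at hX
    exact ginf_of hNa hd0 hda hX
  · have := ortho_of hNa hd0 hc0 hda hca (o2 d hdY c hcY)
    rwa [← eX] at this
  · have := ortho_of hNd ha0 hb0 had hbd' (o1 a haX b hbX)
    rw [sup_right_comm _ (span ℂ {d}) (span ℂ {b}), ← eY] at this
    rwa [sup_right_comm] at this
  · have := ortho_of hNa hd0 hb0 hda hba (inner_eq_zero_symm.1 hbd)
    rwa [← eZ] at this

/-- if `X, Y ∈ G_∞(H)` are compatible with `X ∩ Y` of codimension 2 in both, and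
`Z ∈ G_∞(H)` is ortho-adjacent to both, then there are precisely two elements of `G_∞(H)`
ortho-adjacent to each of `X, Y, Z`. -/
theorem stmt3 (hH : ¬FiniteDimensional ℂ H) (X Y Z : Submodule ℂ H)
    (hX : X ∈ Ginf (H := H)) (hY : Y ∈ Ginf (H := H)) (hZ : Z ∈ Ginf (H := H))
    (hcomp : Compatible X Y)
    (h2X : CodimIn (X ⊓ Y) X 2) (h2Y : CodimIn (X ⊓ Y) Y 2)
    (hZX : OrthoAdjacent Z X) (hZY : OrthoAdjacent Z Y) :
    {W : Submodule ℂ H | W ∈ Ginf (H := H) ∧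
      OrthoAdjacent W X ∧ OrthoAdjacent W Y ∧ OrthoAdjacent W Z}.encard = 2 := by
  have cX := hX.1
  have cY := hY.1
  have DX := compat_dec cX cY hcomp
  have DY := compat_dec cY cX (Commute.symm hcomp)
  obtain ⟨fA, rA⟩ := (codim_iff DX 2).1 h2X
  rw [inf_comm] at h2Y
  obtain ⟨fB, rB⟩ := (codim_iff DY 2).1 h2Y
  have main : ∀ W : Submodule ℂ H, IsClosed (W : Set H) → OrthoAdjacent W X →
      OrthoAdjacent W Y → ∃ a c b d, Half X Y W a c ∧ Half Y X W b d := by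
    intro W hW h1 h2
    obtain ⟨v, t, D1⟩ := exists_dec hW cX h1
    obtain ⟨v', t', D2⟩ := exists_dec hW cY h2
    obtain ⟨a, ha⟩ := half_of D1 D2 fA rA
    obtain ⟨b, hb⟩ := half_of D2 D1 fB rB
    exact ⟨a, t, b, t', ha, hb⟩
  obtain ⟨a, c, b, d, hz, hz'⟩ := main Z hZ.1 hZX hZY
  obtain ⟨g1, g2, g3, g4, g5⟩ := exist_half hX hY hz hz' DX DY
  obtain ⟨k1, k2, k3, k4, k5⟩ := exist_half hY hX hz' hz DY DX
  rw [inf_comm Y X, sup_right_comm] at k1 k2 k3 k4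
  rw [Set.encard_eq_two]
  refine ⟨(X ⊓ Y) ⊔ span ℂ {a} ⊔ span ℂ {d}, (X ⊓ Y) ⊔ span ℂ {c} ⊔ span ℂ {b}, ?_, ?_⟩
  · intro h
    apply g5
    rw [h]
    exact Submodule.mem_sup_left (Submodule.mem_sup_right (Submodule.mem_span_singleton_self c))
  · ext W
    simp only [Set.mem_setOf_eq, Set.mem_insert_iff, Set.mem_singleton_iff]
    constructor
    · rintro ⟨w1, w2, w3, w4⟩
      obtain ⟨a', c', b', d', hw, hw'⟩ := main W w1.1 w2 w3
      obtain ⟨v, t, D⟩ := exists_dec w1.1 hZ.1 w4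
      exact uniq hz hz' hw hw' D
    · rintro (rfl | rfl)
      · exact ⟨g1, g2, g3, g4⟩
      · exact ⟨k1, k3, k2, k4⟩
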